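/- Let v be a sequence with k ≥ ||v|| and let r ≥ 1. Then Ex_r(v,k,n) and Ex_1(v,n) have the same asymptotic order: there exist constants c_1, c_2 > 0 such that for all n, Ex_r(v,k,n) ≤ c_1·Ex_1(v,n) and Ex_1(v,n) ≤ c_2·Ex_r(v,k,n). -/

import Mathlib

/-- `u` is `(k,r)`-sparse: for every `j`, the letters at positions
`j, j+r, ..., j+(k-1)r` (those within range) are pairwise distinct. -/
def ArithSparse (k r : ℕ) (u : List ℕ) : Prop :=
  ∀ j a b : ℕ, a < b → b < k → j + b * r < u.length →
    u.getD (j + a * r) 0 ≠ u.getD (j + b * r) 0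

/-- Two sequences are isomorphic if one is obtained from the other by a
bijective renaming of letters. -/
def Isomorphic (u v : List ℕ) : Prop := ∃ β : ℕ ≃ ℕ, v = u.map β

/-- `u` contains `v` if `u` has a subsequence isomorphic to `v`. -/
def Contains (u v : List ℕ) : Prop := ∃ w : List ℕ, w.Sublist u ∧ Isomorphic w v

/-- `Ex v k r n` is the maximum length of a `v`-free, `(k,r)`-sparse sequence
using at most `n` distinct letters. -/
noncomputable def Ex (v : List ℕ) (k r n : ℕ) : ℕ :=
  sSup {l : ℕ | ∃ u : List ℕ,
    u.length = l ∧ ¬ Contains u v ∧ ArithSparse k r u ∧ u.toFinset.card ≤ n}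

lemma aux_contains_mono {w u v : List ℕ} (h : w.Sublist u) (hc : Contains w v) :
    Contains u v := by
  obtain ⟨x, hx, hi⟩ := hc
  exact ⟨x, hx.trans h, hi⟩

lemma aux_card_mono {w u : List ℕ} (h : w.Sublist u) :
    w.toFinset.card ≤ u.toFinset.card := by
  apply Finset.card_le_card
  intro x hx
  rw [List.mem_toFinset] at hx ⊢
  exact h.subset hx

lemma aux_sparse_left {k r : ℕ} {p s : List ℕ} (h : ArithSparse k r (p ++ s)) :
    ArithSparse k r p := by
  intro j a b hab hb hl
  have h1 := h j a b hab hb (by rw [List.length_append]; omega)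
  have : j + a * r ≤ j + b * r := by gcongr
  rwa [List.getD_append _ _ _ _ (by omega), List.getD_append _ _ _ _ hl] at h1

lemma aux_sparse_right {k r : ℕ} {p s : List ℕ} (h : ArithSparse k r (p ++ s)) :
    ArithSparse k r s := by
  intro j a b hab hb hl
  have h1 := h (p.length + j) a b hab hb (by rw [List.length_append]; omega)
  rw [List.getD_append_right _ _ _ _ (by omega), List.getD_append_right _ _ _ _ (by omega)] at h1
  have e1 : p.length + j + a * r - p.length = j + a * r := by omega
  have e2 : p.length + j + b * r - p.length = j + b * r := by omega
  rwa [e1, e2] at h1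

lemma aux_nodup {m : ℕ} {u : List ℕ} (h : ArithSparse m 1 u) (hl : u.length ≤ m) :
    u.Nodup := by
  rw [List.nodup_iff_pairwise_ne, List.pairwise_iff_getElem]
  intro i j hi hj hij
  have := h 0 i j hij (by omega) (by omega)
  simpa [hi, hj] using this

lemma aux_blocks (m : ℕ) : ∀ (q : ℕ) (u : List ℕ), ArithSparse m 1 u → m * q ≤ u.length →
    ∃ Bs : List (List ℕ), Bs.length = q ∧ Bs.flatten.Sublist u ∧
      ∀ B ∈ Bs, B.toFinset.card = m ∧ B.toFinset ⊆ u.toFinset := by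
  intro q
  induction q with
  | zero => intro u _ _; exact ⟨[], by simp⟩
  | succ q ih =>
    intro u hs hl
    rw [mul_add, mul_one] at hl
    have hu : u.take m ++ u.drop m = u := List.take_append_drop m u
    obtain ⟨Bs, h1, h2, h3⟩ := ih (u.drop m) (aux_sparse_right (p := u.take m) (by rwa [hu]))
      (by rw [List.length_drop]; omega)
    refine ⟨u.take m :: Bs, by simp [h1], ?_, ?_⟩
    · rw [List.flatten_cons]
      conv_rhs => rw [← hu]
      exact (List.Sublist.refl _).append h2
    · intro B hB
      rcases List.mem_cons.1 hB with rfl | hB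
      · refine ⟨?_, ?_⟩
        · rw [List.toFinset_card_of_nodup]
          · rw [List.length_take]; omega
          · exact aux_nodup (aux_sparse_left (s := u.drop m) (by rwa [hu]))
              (by rw [List.length_take]; omega)
        · intro x hx
          rw [List.mem_toFinset] at hx ⊢
          exact List.mem_of_mem_take hx
      · refine ⟨(h3 B hB).1, (h3 B hB).2.trans ?_⟩
        intro x hx
        rw [List.mem_toFinset] at hx ⊢
        exact List.mem_of_mem_drop hx

lemma aux_embed (T : Finset ℕ) : ∀ (Bs : List (List ℕ)) (w : List ℕ), (∀ x ∈ w, x ∈ T) →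
    w.length ≤ (Bs.map List.toFinset).count T → w.Sublist Bs.flatten := by
  intro Bs
  induction Bs with
  | nil =>
    intro w _ hl
    have : w = [] := by simpa using hl
    simp [this]
  | cons B Bs ih =>
    intro w hw hl
    rw [List.map_cons, List.count_cons] at hl
    rw [List.flatten_cons]
    by_cases hB : B.toFinset = T
    · cases w with
      | nil => simp
      | cons x w =>
        have h1 : x ∈ B := by
          rw [← List.mem_toFinset, hB]; exact hw x (by simp)
        have h2 := ih w (fun y hy => hw y (by simp [hy])) (by simp [hB] at hl; omega)
        exact (List.singleton_sublist.2 h1).append h2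
    · have h2 := ih w hw (by simpa [hB] using hl)
      exact h2.trans (List.sublist_append_right _ _)

lemma aux_contains_of_card {T : Finset ℕ} {v u : List ℕ} (hT : T.card = v.toFinset.card)
    (h : ∀ w : List ℕ, (∀ x ∈ w, x ∈ T) → w.length ≤ v.length → w.Sublist u) :
    Contains u v := by
  obtain ⟨e⟩ : Nonempty (↥T ≃ ↥v.toFinset) := ⟨Finset.equivOfCardEq hT⟩
  obtain ⟨β, hβ⟩ : ∃ β : ℕ ≃ ℕ, ∀ x : T, β x = e x := by
    have i1 : Infinite {x // ¬ x ∈ T} := T.finite_toSet.infinite_compl.to_subtype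
    have i2 : Infinite {x // ¬ x ∈ v.toFinset} :=
      v.toFinset.finite_toSet.infinite_compl.to_subtype
    obtain ⟨e'⟩ : Nonempty ({x // ¬ x ∈ T} ≃ {x // ¬ x ∈ v.toFinset}) :=
      nonempty_equiv_of_countable
    exact ⟨Equiv.subtypeCongr e e', fun x => by simp [Equiv.subtypeCongr]⟩
  refine ⟨v.map β.symm, h _ ?_ (by simp), β, by simp⟩
  intro x hx
  obtain ⟨y, hy, rfl⟩ := List.mem_map.1 hx
  have := hβ (e.symm ⟨y, List.mem_toFinset.2 hy⟩)
  rw [Equiv.apply_symm_apply] at this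
  rw [← (Equiv.eq_symm_apply β).2 this]
  exact (e.symm _).2

lemma aux_bdd (v : List ℕ) (n : ℕ) (u : List ℕ) (hc : ¬ Contains u v)
    (hs : ArithSparse v.toFinset.card 1 u) (hn : u.toFinset.card ≤ n) :
    u.length ≤ v.toFinset.card * (2 ^ n * v.length + 1) := by
  by_contra! hlt
  obtain ⟨Bs, h1, h2, h3⟩ := aux_blocks _ (2 ^ n * v.length + 1) u hs hlt.le
  by_cases hT : ∃ T ∈ Bs.map List.toFinset, v.length ≤ (Bs.map List.toFinset).count T
  · obtain ⟨T, hT, hT2⟩ := hT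
    obtain ⟨B, hB, rfl⟩ := List.mem_map.1 hT
    refine hc (aux_contains_of_card (h3 B hB).1 ?_)
    intro w hw hl
    exact (aux_embed _ Bs w hw (hl.trans hT2)).trans h2
  · push Not at hT
    have e : (Bs.map List.toFinset).length = ∑ T ∈ (Bs.map List.toFinset).toFinset,
        (Bs.map List.toFinset).count T := (List.sum_toFinset_count_eq_length _).symm
    have e2 : ∑ T ∈ (Bs.map List.toFinset).toFinset, (Bs.map List.toFinset).count T
        ≤ (Bs.map List.toFinset).toFinset.card * v.length := by
      rw [← smul_eq_mul]
      exact Finset.sum_le_card_nsmul _ _ _ fun T hT' => (hT T (List.mem_toFinset.1 hT')).le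
    have e3 : (Bs.map List.toFinset).toFinset.card ≤ 2 ^ n := by
      calc _ ≤ u.toFinset.powerset.card := by
            apply Finset.card_le_card
            intro T hT'
            obtain ⟨B, hB, rfl⟩ := List.mem_map.1 (List.mem_toFinset.1 hT')
            exact Finset.mem_powerset.2 (h3 B hB).2
        _ = 2 ^ u.toFinset.card := Finset.card_powerset _
        _ ≤ 2 ^ n := Nat.pow_le_pow_right (by norm_num) hn
    rw [List.length_map, h1] at e
    have := Nat.mul_le_mul_right v.length e3
    omega

lemma aux_le_one (v : List ℕ) (n : ℕ) (u : List ℕ) (hc : ¬ Contains u v)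
    (hs : ArithSparse v.toFinset.card 1 u) (hn : u.toFinset.card ≤ n) :
    u.length ≤ Ex v v.toFinset.card 1 n := by
  refine le_csSup ⟨v.toFinset.card * (2 ^ n * v.length + 1), ?_⟩ ⟨u, rfl, hc, hs, hn⟩
  rintro l ⟨u, rfl, hc, hs, hn⟩
  exact aux_bdd v n u hc hs hn

lemma aux_part1 (v : List ℕ) (k r n : ℕ) (hk : v.toFinset.card ≤ k) (hr : 1 ≤ r)
    (u : List ℕ) (hc : ¬ Contains u v) (hs : ArithSparse k r u) (hn : u.toFinset.card ≤ n) :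
    u.length ≤ r * Ex v v.toFinset.card 1 n := by
  obtain ⟨q, hq⟩ : ∃ q, q = (u.length + r - 1) / r := ⟨_, rfl⟩
  have hq1 : ∀ i, i < q ↔ i * r < u.length := by
    intro i
    rw [hq, Nat.lt_iff_add_one_le, Nat.le_div_iff_mul_le (by omega), add_mul]
    omega
  have hq2 : u.length ≤ r * q := by
    have := (hq1 q).not.1 (lt_irrefl _)
    rw [mul_comm]; omega
  let u' := (List.range q).map (fun i => u.getD (i * r) 0)
  have hlen : u'.length = q := by simp [u']
  have hsub : u'.Sublist u := by
    rw [List.sublist_iff_exists_orderEmbedding_getElem?_eq]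
    refine ⟨OrderEmbedding.ofStrictMono (fun i => i * r)
      (fun a b h => Nat.mul_lt_mul_of_pos_right h (by omega)), ?_⟩
    intro i
    change u'[i]? = u[i * r]?
    by_cases hi : i < q
    · have := (hq1 i).1 hi
      simp [u', hi, this]
    · have := (hq1 i).not.1 hi
      rw [List.getElem?_eq_none (by omega), List.getElem?_eq_none (by omega)]
  have hget : ∀ i, i < q → u'.getD i 0 = u.getD (i * r) 0 := by
    intro i hi
    simp [u', hi]
  have hs' : ArithSparse v.toFinset.card 1 u' := by
    intro j a b hab hb hl
    rw [hlen] at hl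
    rw [hget _ hl, hget _ (by omega)]
    have := hs (j * r) a b hab (by omega) (by
      have := (hq1 _).1 hl
      rw [mul_one, add_mul] at this; exact this)
    simpa [add_mul] using this
  have := aux_le_one v n u' (fun h => hc (aux_contains_mono hsub h)) hs'
    ((aux_card_mono hsub).trans hn)
  rw [hlen] at this
  exact hq2.trans (Nat.mul_le_mul_left _ this)

lemma aux_greedy (v : List ℕ) (W : ℕ) (u : List ℕ) :
    ¬ Contains u v → ArithSparse v.toFinset.card 1 u →
    ∃ u' s p : List ℕ, u = p ++ s ∧ u'.Sublist u ∧
      (∀ i j, i < j → j ≤ i + W → j < u'.length → u'.getD i 0 ≠ u'.getD j 0) ∧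
      (∀ x ∈ s, x ∈ u'.drop (u'.length - W)) ∧
      u.length ≤ u'.length * (1 + Ex v v.toFinset.card 1 W) + s.length := by
  induction u using List.reverseRecOn with
  | nil => intro _ _; exact ⟨[], [], [], by simp⟩
  | append_singleton u a ih =>
    intro hc hs
    obtain ⟨u', s, p, h1, h2, h3, h4, h5⟩ :=
      ih (fun h => hc (aux_contains_mono (List.sublist_append_left _ _) h)) (aux_sparse_left hs)
    have hsE : s.length ≤ Ex v v.toFinset.card 1 W := by
      apply aux_le_one
      · intro h
        refine hc (aux_contains_mono ?_ h)
        rw [h1]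
        exact (List.sublist_append_right _ _).trans (List.sublist_append_left _ _)
      · have := aux_sparse_left hs
        rw [h1] at this
        exact aux_sparse_right this
      · calc s.toFinset.card ≤ (u'.drop (u'.length - W)).toFinset.card := by
              apply Finset.card_le_card
              intro x hx
              rw [List.mem_toFinset] at hx ⊢
              exact h4 x hx
          _ ≤ (u'.drop (u'.length - W)).length := List.toFinset_card_le _
          _ ≤ W := by rw [List.length_drop]; omega
    by_cases ha : a ∈ u'.drop (u'.length - W)
    · refine ⟨u', s ++ [a], p, by simp [h1], h2.trans (List.sublist_append_left _ _), h3, ?_, ?_⟩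
      · intro x hx
        rcases List.mem_append.1 hx with hx | hx
        · exact h4 x hx
        · rw [List.mem_singleton.1 hx]; exact ha
      · simp only [List.length_append, List.length_singleton]; omega
    · refine ⟨u' ++ [a], [], u ++ [a], by simp, h2.append (List.Sublist.refl _), ?_, by simp, ?_⟩
      · intro i j hij hj hl
        rw [List.length_append, List.length_singleton] at hl
        rw [List.getD_append _ _ _ _ (by omega)]
        by_cases hj' : j < u'.length
        · rw [List.getD_append _ _ _ _ hj']
          exact h3 i j hij hj hj'
        · have : j = u'.length := by omega
          subst this
          rw [List.getD_append_right _ _ _ _ le_rfl]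
          simp only [Nat.sub_self, List.getD_cons_zero]
          rintro rfl
          apply ha
          rw [List.mem_iff_getElem]
          refine ⟨i - (u'.length - W), by rw [List.length_drop]; omega, ?_⟩
          rw [List.getElem_drop, List.getD_eq_getElem _ _ hij]
          congr 1
          omega
      · simp only [List.length_append, List.length_singleton, List.length_nil]
        rw [add_mul]; omega

lemma aux_part2 (v : List ℕ) (k r n : ℕ) (hk : v.toFinset.card ≤ k) (hr : 1 ≤ r)
    (u : List ℕ) (hc : ¬ Contains u v) (hs : ArithSparse v.toFinset.card 1 u)
    (hn : u.toFinset.card ≤ n) :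
    u.length ≤ (1 + Ex v v.toFinset.card 1 (k * r) + Ex v v.toFinset.card 1 (k * r))
      * Ex v k r n := by
  obtain ⟨u', s, p, h1, h2, h3, h4, h5⟩ := aux_greedy v (k * r) u hc hs
  have hsE : s.length ≤ Ex v v.toFinset.card 1 (k * r) := by
    apply aux_le_one
    · intro h
      refine hc (aux_contains_mono ?_ h)
      rw [h1]
      exact (List.sublist_append_right _ _)
    · rw [h1] at hs
      exact aux_sparse_right hs
    · calc s.toFinset.card ≤ (u'.drop (u'.length - k * r)).toFinset.card := by
            apply Finset.card_le_card
            intro x hx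
            rw [List.mem_toFinset] at hx ⊢
            exact h4 x hx
        _ ≤ (u'.drop (u'.length - k * r)).length := List.toFinset_card_le _
        _ ≤ k * r := by rw [List.length_drop]; omega
  have hu' : u'.length ≤ Ex v k r n := by
    refine le_csSup ⟨r * Ex v v.toFinset.card 1 n, ?_⟩
      ⟨u', rfl, fun h => hc (aux_contains_mono h2 h), ?_, (aux_card_mono h2).trans hn⟩
    · rintro l ⟨u, rfl, hc, hs, hn⟩
      exact aux_part1 v k r n hk hr u hc hs hn
    · intro j a b hab hb hl
      apply h3 _ _ _ _ hl
      · have := Nat.mul_lt_mul_of_pos_right hab hr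
        omega
      · have := Nat.mul_le_mul_right r hb.le
        omega
  have hs2 : s.length ≤ u'.length * Ex v v.toFinset.card 1 (k * r) := by
    rcases u' with _ | ⟨x, u'⟩
    · have : s = [] := List.eq_nil_iff_forall_not_mem.2 fun x hx => by simpa using h4 x hx
      simp [this]
    · refine hsE.trans (Nat.le_mul_of_pos_left _ (by simp))
  refine le_trans ?_ (Nat.mul_le_mul_left _ hu')
  nlinarith

theorem stmt_2 (v : List ℕ) (k r : ℕ) (hk : v.toFinset.card ≤ k) (hr : 1 ≤ r) :
    ∃ c₁ c₂ : ℕ, 0 < c₁ ∧ 0 < c₂ ∧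
      (∀ n : ℕ, Ex v k r n ≤ c₁ * Ex v v.toFinset.card 1 n) ∧
      (∀ n : ℕ, Ex v v.toFinset.card 1 n ≤ c₂ * Ex v k r n) := by
  refine ⟨r, 1 + Ex v v.toFinset.card 1 (k * r) + Ex v v.toFinset.card 1 (k * r),
    hr, by omega, fun n => csSup_le' ?_, fun n => csSup_le' ?_⟩
  · rintro l ⟨u, rfl, hc, hs, hn⟩
    exact aux_part1 v k r n hk hr u hc hs hn
  · rintro l ⟨u, rfl, hc, hs, hn⟩
    exact aux_part2 v k r n hk hr u hc hs hn
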